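/- In the logic for DB-ASMs, parallel composition of DB-ASM rules is commutative and associative and sequential composition is associative: (r) par r₁ r₂ endpar ≡ par r₂ r₁ endpar; (s) par (par r₁ r₂ endpar) r₃ endpar ≡ par r₁ (par r₂ r₃ endpar) endpar; (t) seq (seq r₁ r₂ endseq) r₃ endseq ≡ seq r₁ (seq r₂ r₃ endseq) endseq. -/

import Mathlib

set_option maxHeartbeats 1000000

namespace DBASM

/-- A signature of meta-finite states: a finite set `F` of dynamic function
symbols (all unary; arguments are read as tuples), static function symbols
`Stat` and location-operator names `Rho`. -/
structure Sig where
  F : Type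
  Stat : Type
  Rho : Type
  [fintypeF : Fintype F]
  [deqF : DecidableEq F]

attribute [instance] Sig.fintypeF Sig.deqF

variable {σ : Sig} {B : Type}

/-- A meta-finite state (interpretation) over the base set `B`: a finite
database part `db`, interpretations of the dynamic and static function
symbols, and interpretations of the location operators as multiset
functions. -/
structure Interp (σ : Sig) (B : Type) where
  db : Set B
  db_fin : db.Finite
  dyn : σ.F → B → B
  stat : σ.Stat → B → B
  lop : σ.Rho → Multiset B → B

/-- An update `(f, a, b)`: the location `(f, a)` gets the value `b`. -/
abbrev Upd (σ : Sig) (B : Type) := σ.F × B × B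

/-- An update set. -/
abbrev USet (σ : Sig) (B : Type) := Set (Upd σ B)

/-- An update multiset, represented by its multiplicity function. -/
abbrev UMul (σ : Sig) (B : Type) := Upd σ B → ℕ

/-- Consistency of an update set. -/
def consistentU (Δ : USet σ B) : Prop :=
  ∀ (f : σ.F) (a b b' : B), (f, a, b) ∈ Δ → (f, a, b') ∈ Δ → b = b'

open Classical in
/-- The successor state `S + Δ`. -/
noncomputable def Interp.apply (I : Interp σ B) (Δ : USet σ B) : Interp σ B :=
  { I with dyn := fun f a => if h : ∃ b, (f, a, b) ∈ Δ then h.choose else I.dyn f a }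

/-- A (first-order) variable assignment: `dbv` interprets the database
variables, `av` the algorithmic variables. -/
structure Asg (B : Type) where
  dbv : ℕ → B
  av : ℕ → B

def Asg.updDb (ζ : Asg B) (x : ℕ) (a : B) : Asg B :=
  { ζ with dbv := Function.update ζ.dbv x a }

def Asg.updA (ζ : Asg B) (x : ℕ) (a : B) : Asg B :=
  { ζ with av := Function.update ζ.av x a }

/-- Pure terms (terms of the first-order logic of meta-finite states). -/
inductive PTerm (σ : Sig) : Type where
  | var : ℕ → PTerm σ
  | avar : ℕ → PTerm σ
  | dyn : σ.F → PTerm σ → PTerm σ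
  | stat : σ.Stat → PTerm σ → PTerm σ

/-- Pure formulae (first-order formulae of meta-finite states). -/
inductive PFml (σ : Sig) : Type where
  | eq : PTerm σ → PTerm σ → PFml σ
  | not : PFml σ → PFml σ
  | and : PFml σ → PFml σ → PFml σ
  | allDb : ℕ → PFml σ → PFml σ
  | allA : ℕ → PFml σ → PFml σ

/-- DB-ASM rules. -/
inductive Rule (σ : Sig) : Type where
  | assign : σ.F → PTerm σ → PTerm σ → Rule σ
  | cond : PFml σ → Rule σ → Rule σ
  | forall_ : ℕ → PFml σ → Rule σ → Rule σ
  | choose : ℕ → PFml σ → Rule σ → Rule σ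
  | par : Rule σ → Rule σ → Rule σ
  | seq : Rule σ → Rule σ → Rule σ
  | letr : σ.F → PTerm σ → σ.Rho → Rule σ → Rule σ

def PTerm.val : PTerm σ → Interp σ B → Asg B → B
  | .var x, _, ζ => ζ.dbv x
  | .avar x, _, ζ => ζ.av x
  | .dyn f t, I, ζ => I.dyn f (t.val I ζ)
  | .stat g t, I, ζ => I.stat g (t.val I ζ)

def PFml.val : PFml σ → Interp σ B → Asg B → Prop
  | .eq s t, I, ζ => s.val I ζ = t.val I ζ
  | .not φ, I, ζ => ¬ φ.val I ζ
  | .and φ ψ, I, ζ => φ.val I ζ ∧ ψ.val I ζ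
  | .allDb x φ, I, ζ => ∀ a ∈ I.db, φ.val I (ζ.updDb x a)
  | .allA x φ, I, ζ => ∀ a : B, φ.val I (ζ.updA x a)

/-- The update set obtained from an update multiset by forgetting multiplicities. -/
def mulToSet (D : UMul σ B) : USet σ B := { u | D u ≠ 0 }

open Classical in
/-- The multiset of values assigned by an update multiset to the location `(f, a)`. -/
noncomputable def mulVals (D : UMul σ B) (f : σ.F) (a : B) : Multiset B :=
  if h : (Function.support fun b => D (f, a, b)).Finite then
    h.toFinset.val.bind (fun b => Multiset.replicate (D (f, a, b)) b)
  else 0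

/-- Sequential composition `Δ₁ ⊘ Δ₂` of update sets. -/
def seqComp (Δ₁ Δ₂ : USet σ B) : USet σ B :=
  Δ₂ ∪ { u | u ∈ Δ₁ ∧ ∀ b : B, (u.1, u.2.1, b) ∉ Δ₂ }

open Classical in
/-- Sequential composition `Δ̈₁ ⊘ Δ̈₂` of update multisets. -/
noncomputable def mseqComp (D₁ D₂ : UMul σ B) : UMul σ B :=
  fun u => D₂ u + if ∀ b : B, D₂ (u.1, u.2.1, b) = 0 then D₁ u else 0

open Classical in
/-- Collapsing an update multiset to an update set, aggregating the values at
the location `(f, a)` by the location operator `ρ`. -/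
noncomputable def scollapse (I : Interp σ B) (f : σ.F) (a : B) (ρ : σ.Rho)
    (D : UMul σ B) : USet σ B :=
  {u | u = (f, a, I.lop ρ (mulVals D f a))} ∪
    { u | D u ≠ 0 ∧ ¬ (u.1 = f ∧ u.2.1 = a) }

open Classical in
/-- Collapsing inside an update multiset (for the let rule). -/
noncomputable def mcollapse (I : Interp σ B) (f : σ.F) (a : B) (ρ : σ.Rho)
    (D : UMul σ B) : UMul σ B :=
  fun u =>
    if u.1 = f ∧ u.2.1 = a then
      (if u.2.2 = I.lop ρ (mulVals D f a) then 1 else 0)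
    else D u

open Classical in
/-- The set `Δ̈(r, S, ζ)` of update multisets yielded by a DB-ASM rule. -/
noncomputable def updMuls : Rule σ → Interp σ B → Asg B → Set (UMul σ B)
  | .assign f t s, I, ζ =>
      { D | D = fun u => if u = (f, t.val I ζ, s.val I ζ) then 1 else 0 }
  | .cond φ r, I, ζ =>
      if φ.val I ζ then updMuls r I ζ else { D | D = fun _ => 0 }
  | .forall_ x φ r, I, ζ =>
      { D | ∃ g : B → UMul σ B,
          (∀ a ∈ I.db, (φ.val I (ζ.updDb x a)) → g a ∈ updMuls r I (ζ.updDb x a)) ∧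
          (∀ a : B, ¬ (a ∈ I.db ∧ φ.val I (ζ.updDb x a)) → g a = fun _ => 0) ∧
          D = fun u => ∑ a ∈ I.db_fin.toFinset, g a u }
  | .choose x φ r, I, ζ =>
      { D | ∃ a ∈ I.db, φ.val I (ζ.updDb x a) ∧ D ∈ updMuls r I (ζ.updDb x a) }
  | .par r₁ r₂, I, ζ =>
      { D | ∃ D₁ ∈ updMuls r₁ I ζ, ∃ D₂ ∈ updMuls r₂ I ζ,
          D = fun u => D₁ u + D₂ u }
  | .seq r₁ r₂, I, ζ =>
      { D | ∃ D₁ ∈ updMuls r₁ I ζ, consistentU (mulToSet D₁) ∧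
            ∃ D₂ ∈ updMuls r₂ (I.apply (mulToSet D₁)) ζ, D = mseqComp D₁ D₂ } ∪
      { D₁ | D₁ ∈ updMuls r₁ I ζ ∧ ¬ consistentU (mulToSet D₁) }
  | .letr f t ρ r, I, ζ =>
      { D | ∃ D' ∈ updMuls r I ζ, D = mcollapse I f (t.val I ζ) ρ D' }

open Classical in
/-- The set `Δ(r, S, ζ)` of update sets yielded by a DB-ASM rule. -/
noncomputable def updSets : Rule σ → Interp σ B → Asg B → Set (USet σ B)
  | .assign f t s, I, ζ => { Δ | Δ = {(f, t.val I ζ, s.val I ζ)} }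
  | .cond φ r, I, ζ =>
      if φ.val I ζ then updSets r I ζ else { Δ | Δ = ∅ }
  | .forall_ x φ r, I, ζ =>
      { Δ | ∃ g : B → USet σ B,
          (∀ a ∈ I.db, (φ.val I (ζ.updDb x a)) → g a ∈ updSets r I (ζ.updDb x a)) ∧
          Δ = ⋃ a ∈ { a ∈ I.db | φ.val I (ζ.updDb x a) }, g a }
  | .choose x φ r, I, ζ =>
      { Δ | ∃ a ∈ I.db, φ.val I (ζ.updDb x a) ∧ Δ ∈ updSets r I (ζ.updDb x a) }
  | .par r₁ r₂, I, ζ =>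
      { Δ | ∃ Δ₁ ∈ updSets r₁ I ζ, ∃ Δ₂ ∈ updSets r₂ I ζ, Δ = Δ₁ ∪ Δ₂ }
  | .seq r₁ r₂, I, ζ =>
      { Δ | ∃ Δ₁ ∈ updSets r₁ I ζ, consistentU Δ₁ ∧
            ∃ Δ₂ ∈ updSets r₂ (I.apply Δ₁) ζ, Δ = seqComp Δ₁ Δ₂ } ∪
      { Δ₁ | Δ₁ ∈ updSets r₁ I ζ ∧ ¬ consistentU Δ₁ }
  | .letr f t ρ r, I, ζ =>
      { Δ | ∃ D ∈ updMuls r I ζ, Δ = scollapse I f (t.val I ζ) ρ D }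


mutual
/-- Terms of the logic for DB-ASMs (including ρ-terms). -/
inductive LTerm (σ : Sig) : Type where
  | var : ℕ → LTerm σ
  | avar : ℕ → LTerm σ
  | dyn : σ.F → LTerm σ → LTerm σ
  | stat : σ.Stat → LTerm σ → LTerm σ
  | rho : σ.Rho → ℕ → LTerm σ → Fml σ → LTerm σ

/-- Formulae of the logic for DB-ASMs. -/
inductive Fml (σ : Sig) : Type where
  | eq : LTerm σ → LTerm σ → Fml σ
  | not : Fml σ → Fml σ
  | and : Fml σ → Fml σ → Fml σ
  | allDb : ℕ → Fml σ → Fml σ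
  | allA : ℕ → Fml σ → Fml σ
  | allM : ℕ → Fml σ → Fml σ
  | allX : ℕ → Fml σ → Fml σ
  | allXc : ℕ → Fml σ → Fml σ
  | allXm : ℕ → Fml σ → Fml σ
  | allXmc : ℕ → Fml σ → Fml σ
  | allF : ℕ → Fml σ → Fml σ
  | allG : ℕ → Fml σ → Fml σ
  | upd : Rule σ → ℕ → Fml σ
  | upm : Rule σ → ℕ → Fml σ
  | memM : ℕ → LTerm σ → LTerm σ → Fml σ
  | memX : ℕ → σ.F → LTerm σ → LTerm σ → Fml σ
  | memXc : ℕ → σ.F → LTerm σ → LTerm σ → LTerm σ → Fml σ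
  | memXm : ℕ → σ.F → LTerm σ → LTerm σ → LTerm σ → Fml σ
  | memXmc : ℕ → σ.F → LTerm σ → LTerm σ → LTerm σ → LTerm σ → Fml σ
  | memF : ℕ → σ.F → LTerm σ → LTerm σ → LTerm σ → LTerm σ → LTerm σ → LTerm σ → LTerm σ → Fml σ
  | memG : ℕ → σ.F → LTerm σ → LTerm σ → LTerm σ → LTerm σ → LTerm σ → LTerm σ → LTerm σ → Fml σ
  | box : ℕ → Fml σ → Fml σ
end

/-- Second-order variable assignment (one namespace per kind of
second-order variable). -/
structure SOAsg (σ : Sig) (B : Type) where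
  m : ℕ → Set (B × B)
  x : ℕ → USet σ B
  xc : ℕ → Set (σ.F × B × B × B)
  xm : ℕ → Set (σ.F × B × B × B)
  xmc : ℕ → Set (σ.F × B × B × B × B)
  fv : ℕ → Set (σ.F × B × B × B × B × B × B × B)
  gv : ℕ → Set (σ.F × B × B × B × B × B × B × B)

/-- A second-order assignment is admissible if all its values are finite sets. -/
def SOAsg.Fin (Ξ : SOAsg σ B) : Prop :=
  (∀ n, (Ξ.m n).Finite) ∧ (∀ n, (Ξ.x n).Finite) ∧ (∀ n, (Ξ.xc n).Finite) ∧
  (∀ n, (Ξ.xm n).Finite) ∧ (∀ n, (Ξ.xmc n).Finite) ∧ (∀ n, (Ξ.fv n).Finite) ∧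
  (∀ n, (Ξ.gv n).Finite)

def SOAsg.uM (Ξ : SOAsg σ B) (n : ℕ) (P : Set (B × B)) : SOAsg σ B :=
  { Ξ with m := Function.update Ξ.m n P }
def SOAsg.uX (Ξ : SOAsg σ B) (n : ℕ) (P : USet σ B) : SOAsg σ B :=
  { Ξ with x := Function.update Ξ.x n P }
def SOAsg.uXc (Ξ : SOAsg σ B) (n : ℕ) (P : Set (σ.F × B × B × B)) : SOAsg σ B :=
  { Ξ with xc := Function.update Ξ.xc n P }
def SOAsg.uXm (Ξ : SOAsg σ B) (n : ℕ) (P : Set (σ.F × B × B × B)) : SOAsg σ B :=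
  { Ξ with xm := Function.update Ξ.xm n P }
def SOAsg.uXmc (Ξ : SOAsg σ B) (n : ℕ) (P : Set (σ.F × B × B × B × B)) : SOAsg σ B :=
  { Ξ with xmc := Function.update Ξ.xmc n P }
def SOAsg.uF (Ξ : SOAsg σ B) (n : ℕ) (P : Set (σ.F × B × B × B × B × B × B × B)) : SOAsg σ B :=
  { Ξ with fv := Function.update Ξ.fv n P }
def SOAsg.uG (Ξ : SOAsg σ B) (n : ℕ) (P : Set (σ.F × B × B × B × B × B × B × B)) : SOAsg σ B :=
  { Ξ with gv := Function.update Ξ.gv n P }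

open Classical in
mutual
/-- Value of a term of the logic for DB-ASMs. -/
noncomputable def lval (I : Interp σ B) (ζ : Asg B) (Ξ : SOAsg σ B) : LTerm σ → B
  | .var x => ζ.dbv x
  | .avar x => ζ.av x
  | .dyn f t => I.dyn f (lval I ζ Ξ t)
  | .stat g t => I.stat g (lval I ζ Ξ t)
  | .rho ρ x t φ =>
      I.lop ρ (Multiset.map (fun a => lval I (ζ.updDb x a) Ξ t)
        (Multiset.filter (fun a => fval I (ζ.updDb x a) Ξ φ) I.db_fin.toFinset.val))

/-- Truth value of a formula of the logic for DB-ASMs. -/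
noncomputable def fval (I : Interp σ B) (ζ : Asg B) (Ξ : SOAsg σ B) : Fml σ → Prop
  | .eq s t => lval I ζ Ξ s = lval I ζ Ξ t
  | .not φ => ¬ fval I ζ Ξ φ
  | .and φ ψ => fval I ζ Ξ φ ∧ fval I ζ Ξ ψ
  | .allDb x φ => ∀ a ∈ I.db, fval I (ζ.updDb x a) Ξ φ
  | .allA x φ => ∀ a : B, fval I (ζ.updA x a) Ξ φ
  | .allM n φ => ∀ P : Set (B × B), P.Finite → fval I ζ (Ξ.uM n P) φ
  | .allX n φ => ∀ P : USet σ B, P.Finite → fval I ζ (Ξ.uX n P) φ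
  | .allXc n φ => ∀ P : Set (σ.F × B × B × B), P.Finite → fval I ζ (Ξ.uXc n P) φ
  | .allXm n φ => ∀ P : Set (σ.F × B × B × B), P.Finite → fval I ζ (Ξ.uXm n P) φ
  | .allXmc n φ => ∀ P : Set (σ.F × B × B × B × B), P.Finite → fval I ζ (Ξ.uXmc n P) φ
  | .allF n φ => ∀ P : Set (σ.F × B × B × B × B × B × B × B), P.Finite → fval I ζ (Ξ.uF n P) φ
  | .allG n φ => ∀ P : Set (σ.F × B × B × B × B × B × B × B), P.Finite → fval I ζ (Ξ.uG n P) φ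
  | .upd r n => Ξ.x n ∈ updSets r I ζ
  | .upm r n =>
      (fun u : Upd σ B => {ta : B | (u.1, u.2.1, u.2.2, ta) ∈ Ξ.xm n}.ncard) ∈ updMuls r I ζ
  | .memM n s t => (lval I ζ Ξ s, lval I ζ Ξ t) ∈ Ξ.m n
  | .memX n f t t0 => (f, lval I ζ Ξ t, lval I ζ Ξ t0) ∈ Ξ.x n
  | .memXc n f t t0 s => (f, lval I ζ Ξ t, lval I ζ Ξ t0, lval I ζ Ξ s) ∈ Ξ.xc n
  | .memXm n f t t0 ta => (f, lval I ζ Ξ t, lval I ζ Ξ t0, lval I ζ Ξ ta) ∈ Ξ.xm n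
  | .memXmc n f t t0 ta s =>
      (f, lval I ζ Ξ t, lval I ζ Ξ t0, lval I ζ Ξ ta, lval I ζ Ξ s) ∈ Ξ.xmc n
  | .memF n f t1 t2 t3 t4 t5 t6 t7 =>
      (f, lval I ζ Ξ t1, lval I ζ Ξ t2, lval I ζ Ξ t3, lval I ζ Ξ t4,
        lval I ζ Ξ t5, lval I ζ Ξ t6, lval I ζ Ξ t7) ∈ Ξ.fv n
  | .memG n f t1 t2 t3 t4 t5 t6 t7 =>
      (f, lval I ζ Ξ t1, lval I ζ Ξ t2, lval I ζ Ξ t3, lval I ζ Ξ t4,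
        lval I ζ Ξ t5, lval I ζ Ξ t6, lval I ζ Ξ t7) ∈ Ξ.gv n
  | .box n φ => ¬ consistentU (Ξ.x n) ∨ fval (I.apply (Ξ.x n)) ζ Ξ φ
end
namespace Fml

def imp (φ ψ : Fml σ) : Fml σ := .not (.and φ (.not ψ))
def or (φ ψ : Fml σ) : Fml σ := .not (.and (.not φ) (.not ψ))
def iff (φ ψ : Fml σ) : Fml σ := .and (imp φ ψ) (imp ψ φ)
def exDb (x : ℕ) (φ : Fml σ) : Fml σ := .not (.allDb x (.not φ))
def exA (x : ℕ) (φ : Fml σ) : Fml σ := .not (.allA x (.not φ))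
def exM (n : ℕ) (φ : Fml σ) : Fml σ := .not (.allM n (.not φ))
def exX (n : ℕ) (φ : Fml σ) : Fml σ := .not (.allX n (.not φ))
def exXc (n : ℕ) (φ : Fml σ) : Fml σ := .not (.allXc n (.not φ))
def exXm (n : ℕ) (φ : Fml σ) : Fml σ := .not (.allXm n (.not φ))
def exXmc (n : ℕ) (φ : Fml σ) : Fml σ := .not (.allXmc n (.not φ))
def exF (n : ℕ) (φ : Fml σ) : Fml σ := .not (.allF n (.not φ))
def exG (n : ℕ) (φ : Fml σ) : Fml σ := .not (.allG n (.not φ))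

def tt : Fml σ := .eq (.var 0) (.var 0)

def bigAnd : List (Fml σ) → Fml σ
  | [] => tt
  | [φ] => φ
  | φ :: l => .and φ (bigAnd l)

/-- Conjunction over all dynamic function symbols. -/
noncomputable def allFdyn (k : σ.F → Fml σ) : Fml σ :=
  bigAnd ((Finset.univ : Finset σ.F).toList.map k)

/-- Conjunction over all dynamic function symbols different from `f`. -/
noncomputable def allFdynNe (f : σ.F) (k : σ.F → Fml σ) : Fml σ :=
  bigAnd (((Finset.univ : Finset σ.F).erase f).toList.map k)

def allAs (l : List ℕ) (φ : Fml σ) : Fml σ := l.foldr Fml.allA φ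
def exAs (l : List ℕ) (φ : Fml σ) : Fml σ := l.foldr exA φ

end Fml

/-- Embedding of pure terms into terms of the logic. -/
def PTerm.toL : PTerm σ → LTerm σ
  | .var x => .var x
  | .avar x => .avar x
  | .dyn f t => .dyn f t.toL
  | .stat g t => .stat g t.toL

/-- Embedding of pure formulae into formulae of the logic. -/
def PFml.toF : PFml σ → Fml σ
  | .eq s t => .eq s.toL t.toL
  | .not φ => .not φ.toF
  | .and φ ψ => .and φ.toF ψ.toF
  | .allDb x φ => .allDb x φ.toF
  | .allA x φ => .allA x φ.toF

/-- A strict upper bound for the first-order variables occurring in a pure term. -/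
def PTerm.bnd : PTerm σ → ℕ
  | .var x => x + 1
  | .avar x => x + 1
  | .dyn _ t => t.bnd
  | .stat _ t => t.bnd

def PFml.bnd : PFml σ → ℕ
  | .eq s t => max s.bnd t.bnd
  | .not φ => φ.bnd
  | .and φ ψ => max φ.bnd ψ.bnd
  | .allDb x φ => max (x + 1) φ.bnd
  | .allA x φ => max (x + 1) φ.bnd

def Rule.bnd : Rule σ → ℕ
  | .assign _ t s => max t.bnd s.bnd
  | .cond φ r => max φ.bnd r.bnd
  | .forall_ x φ r => max (x + 1) (max φ.bnd r.bnd)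
  | .choose x φ r => max (x + 1) (max φ.bnd r.bnd)
  | .par r₁ r₂ => max r₁.bnd r₂.bnd
  | .seq r₁ r₂ => max r₁.bnd r₂.bnd
  | .letr _ t _ r => max t.bnd r.bnd

/-- Renaming of a free database variable `x` into `y` in a pure term. -/
def PTerm.rename (x y : ℕ) : PTerm σ → PTerm σ
  | .var z => if z = x then .var y else .var z
  | .avar z => .avar z
  | .dyn f t => .dyn f (t.rename x y)
  | .stat g t => .stat g (t.rename x y)

def PFml.rename (x y : ℕ) : PFml σ → PFml σ
  | .eq s t => .eq (s.rename x y) (t.rename x y)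
  | .not φ => .not (φ.rename x y)
  | .and φ ψ => .and (φ.rename x y) (ψ.rename x y)
  | .allDb z φ => if z = x then .allDb z φ else .allDb z (φ.rename x y)
  | .allA z φ => .allA z (φ.rename x y)

def Rule.rename (x y : ℕ) : Rule σ → Rule σ
  | .assign f t s => .assign f (t.rename x y) (s.rename x y)
  | .cond φ r => .cond (φ.rename x y) (r.rename x y)
  | .forall_ z φ r =>
      if z = x then .forall_ z φ r else .forall_ z (φ.rename x y) (r.rename x y)
  | .choose z φ r =>
      if z = x then .choose z φ r else .choose z (φ.rename x y) (r.rename x y)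
  | .par r₁ r₂ => .par (r₁.rename x y) (r₂.rename x y)
  | .seq r₁ r₂ => .seq (r₁.rename x y) (r₂.rename x y)
  | .letr f t ρ r => .letr f (t.rename x y) ρ (r.rename x y)

mutual
/-- The free second-order variables of kind `X` (update-set variables) of a term. -/
def LTerm.freeX : LTerm σ → Set ℕ
  | .var _ => ∅
  | .avar _ => ∅
  | .dyn _ t => t.freeX
  | .stat _ t => t.freeX
  | .rho _ _ t φ => t.freeX ∪ φ.freeX

/-- The free second-order variables of kind `X` (update-set variables) of a formula. -/
def Fml.freeX : Fml σ → Set ℕ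
  | .eq s t => s.freeX ∪ t.freeX
  | .not φ => φ.freeX
  | .and φ ψ => φ.freeX ∪ ψ.freeX
  | .allDb _ φ => φ.freeX
  | .allA _ φ => φ.freeX
  | .allM _ φ => φ.freeX
  | .allX n φ => φ.freeX \ {n}
  | .allXc _ φ => φ.freeX
  | .allXm _ φ => φ.freeX
  | .allXmc _ φ => φ.freeX
  | .allF _ φ => φ.freeX
  | .allG _ φ => φ.freeX
  | .upd _ n => {n}
  | .upm _ _ => ∅
  | .memM _ s t => s.freeX ∪ t.freeX
  | .memX n _ t t0 => {n} ∪ t.freeX ∪ t0.freeX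
  | .memXc _ _ t t0 s => t.freeX ∪ t0.freeX ∪ s.freeX
  | .memXm _ _ t t0 ta => t.freeX ∪ t0.freeX ∪ ta.freeX
  | .memXmc _ _ t t0 ta s => t.freeX ∪ t0.freeX ∪ ta.freeX ∪ s.freeX
  | .memF _ _ t1 t2 t3 t4 t5 t6 t7 =>
      t1.freeX ∪ t2.freeX ∪ t3.freeX ∪ t4.freeX ∪ t5.freeX ∪ t6.freeX ∪ t7.freeX
  | .memG _ _ t1 t2 t3 t4 t5 t6 t7 =>
      t1.freeX ∪ t2.freeX ∪ t3.freeX ∪ t4.freeX ∪ t5.freeX ∪ t6.freeX ∪ t7.freeX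
  | .box n φ => {n} ∪ φ.freeX
end

mutual
/-- A strict upper bound for all first-order variables occurring in a term. -/
def LTerm.bndF : LTerm σ → ℕ
  | .var x => x + 1
  | .avar x => x + 1
  | .dyn _ t => t.bndF
  | .stat _ t => t.bndF
  | .rho _ x t φ => max (x + 1) (max t.bndF φ.bndF)

/-- A strict upper bound for all first-order variables occurring in a formula. -/
def Fml.bndF : Fml σ → ℕ
  | .eq s t => max s.bndF t.bndF
  | .not φ => φ.bndF
  | .and φ ψ => max φ.bndF ψ.bndF
  | .allDb x φ => max (x + 1) φ.bndF
  | .allA x φ => max (x + 1) φ.bndF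
  | .allM _ φ => φ.bndF
  | .allX _ φ => φ.bndF
  | .allXc _ φ => φ.bndF
  | .allXm _ φ => φ.bndF
  | .allXmc _ φ => φ.bndF
  | .allF _ φ => φ.bndF
  | .allG _ φ => φ.bndF
  | .upd r _ => r.bnd
  | .upm r _ => r.bnd
  | .memM _ s t => max s.bndF t.bndF
  | .memX _ _ t t0 => max t.bndF t0.bndF
  | .memXc _ _ t t0 s => max t.bndF (max t0.bndF s.bndF)
  | .memXm _ _ t t0 ta => max t.bndF (max t0.bndF ta.bndF)
  | .memXmc _ _ t t0 ta s => max (max t.bndF t0.bndF) (max ta.bndF s.bndF)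
  | .memF _ _ t1 t2 t3 t4 t5 t6 t7 =>
      max (max (max t1.bndF t2.bndF) (max t3.bndF t4.bndF))
        (max (max t5.bndF t6.bndF) t7.bndF)
  | .memG _ _ t1 t2 t3 t4 t5 t6 t7 =>
      max (max (max t1.bndF t2.bndF) (max t3.bndF t4.bndF))
        (max (max t5.bndF t6.bndF) t7.bndF)
  | .box _ φ => φ.bndF
end

mutual
/-- Purity of a term: no ρ-subterms. -/
def LTerm.isPure : LTerm σ → Prop
  | .var _ => True
  | .avar _ => True
  | .dyn _ t => t.isPure
  | .stat _ t => t.isPure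
  | .rho _ _ _ _ => False

/-- A pure formula: built from equations between ρ-free terms by `¬`, `∧`
and first-order quantification only. -/
def Fml.isPure : Fml σ → Prop
  | .eq s t => s.isPure ∧ t.isPure
  | .not φ => φ.isPure
  | .and φ ψ => φ.isPure ∧ ψ.isPure
  | .allDb _ φ => φ.isPure
  | .allA _ φ => φ.isPure
  | _ => False
end

mutual
/-- A static term: contains no dynamic function symbols. -/
def LTerm.isStatic : LTerm σ → Prop
  | .var _ => True
  | .avar _ => True
  | .dyn _ _ => False
  | .stat _ t => t.isStatic
  | .rho _ _ t φ => t.isStatic ∧ φ.isStatic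

/-- A static formula: contains no dynamic function symbols. -/
def Fml.isStatic : Fml σ → Prop
  | .eq s t => s.isStatic ∧ t.isStatic
  | .not φ => φ.isStatic
  | .and φ ψ => φ.isStatic ∧ ψ.isStatic
  | .allDb _ φ => φ.isStatic
  | .allA _ φ => φ.isStatic
  | _ => False
end

mutual
/-- Whether a term contains a subformula of the form `upd(r, X)`
(flag `true`) or `upm(r, Ẍ)` (flag `false`). -/
def LTerm.hasR (b : Bool) : LTerm σ → Prop
  | .var _ => False
  | .avar _ => False
  | .dyn _ t => t.hasR b
  | .stat _ t => t.hasR b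
  | .rho _ _ t φ => t.hasR b ∨ φ.hasR b

/-- Whether a formula contains a subformula of the form `upd(r, X)`
(flag `true`) or `upm(r, Ẍ)` (flag `false`). -/
def Fml.hasR (b : Bool) : Fml σ → Prop
  | .eq s t => s.hasR b ∨ t.hasR b
  | .not φ => φ.hasR b
  | .and φ ψ => φ.hasR b ∨ ψ.hasR b
  | .allDb _ φ => φ.hasR b
  | .allA _ φ => φ.hasR b
  | .allM _ φ => φ.hasR b
  | .allX _ φ => φ.hasR b
  | .allXc _ φ => φ.hasR b
  | .allXm _ φ => φ.hasR b
  | .allXmc _ φ => φ.hasR b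
  | .allF _ φ => φ.hasR b
  | .allG _ φ => φ.hasR b
  | .upd _ _ => b = true
  | .upm _ _ => b = false
  | .memM _ s t => s.hasR b ∨ t.hasR b
  | .memX _ _ t t0 => t.hasR b ∨ t0.hasR b
  | .memXc _ _ t t0 s => t.hasR b ∨ t0.hasR b ∨ s.hasR b
  | .memXm _ _ t t0 ta => t.hasR b ∨ t0.hasR b ∨ ta.hasR b
  | .memXmc _ _ t t0 ta s => t.hasR b ∨ t0.hasR b ∨ ta.hasR b ∨ s.hasR b
  | .memF _ _ t1 t2 t3 t4 t5 t6 t7 =>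
      t1.hasR b ∨ t2.hasR b ∨ t3.hasR b ∨ t4.hasR b ∨ t5.hasR b ∨ t6.hasR b ∨ t7.hasR b
  | .memG _ _ t1 t2 t3 t4 t5 t6 t7 =>
      t1.hasR b ∨ t2.hasR b ∨ t3.hasR b ∨ t4.hasR b ∨ t5.hasR b ∨ t6.hasR b ∨ t7.hasR b
  | .box _ φ => φ.hasR b
end

/-- Whether a formula contains a subformula of the form `upd(r, X)`. -/
def Fml.hasUpd (φ : Fml σ) : Prop := φ.hasR true
/-- Whether a formula contains a subformula of the form `upm(r, Ẍ)`. -/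
def Fml.hasUpm (φ : Fml σ) : Prop := φ.hasR false

mutual
/-- Substitution of the term `u` for the first-order variable `x`
(database namespace if `dbNs`, algorithmic namespace otherwise) in a term. -/
def LTerm.subst (dbNs : Bool) (x : ℕ) (u : LTerm σ) : LTerm σ → LTerm σ
  | .var y => if dbNs && (y == x) then u else .var y
  | .avar y => if !dbNs && (y == x) then u else .avar y
  | .dyn f t => .dyn f (LTerm.subst dbNs x u t)
  | .stat g t => .stat g (LTerm.subst dbNs x u t)
  | .rho ρ y t φ =>
      if dbNs && (y == x) then .rho ρ y t φ
      else .rho ρ y (LTerm.subst dbNs x u t) (φ.subst dbNs x u)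
termination_by t => sizeOf t

/-- Substitution of the term `u` for the first-order variable `x` in a formula. -/
def Fml.subst (dbNs : Bool) (x : ℕ) (u : LTerm σ) : Fml σ → Fml σ
  | .eq s t => .eq (LTerm.subst dbNs x u s) (LTerm.subst dbNs x u t)
  | .not φ => .not (φ.subst dbNs x u)
  | .and φ ψ => .and (φ.subst dbNs x u) (ψ.subst dbNs x u)
  | .allDb y φ => if dbNs && (y == x) then .allDb y φ else .allDb y (φ.subst dbNs x u)
  | .allA y φ => if !dbNs && (y == x) then .allA y φ else .allA y (φ.subst dbNs x u)
  | .allM n φ => .allM n (φ.subst dbNs x u)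
  | .allX n φ => .allX n (φ.subst dbNs x u)
  | .allXc n φ => .allXc n (φ.subst dbNs x u)
  | .allXm n φ => .allXm n (φ.subst dbNs x u)
  | .allXmc n φ => .allXmc n (φ.subst dbNs x u)
  | .allF n φ => .allF n (φ.subst dbNs x u)
  | .allG n φ => .allG n (φ.subst dbNs x u)
  | .upd r n => .upd r n
  | .upm r n => .upm r n
  | .memM n s t => .memM n (LTerm.subst dbNs x u s) (LTerm.subst dbNs x u t)
  | .memX n f t t0 => .memX n f (LTerm.subst dbNs x u t) (LTerm.subst dbNs x u t0)
  | .memXc n f t t0 s => .memXc n f (LTerm.subst dbNs x u t) (LTerm.subst dbNs x u t0) (LTerm.subst dbNs x u s)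
  | .memXm n f t t0 ta => .memXm n f (LTerm.subst dbNs x u t) (LTerm.subst dbNs x u t0) (LTerm.subst dbNs x u ta)
  | .memXmc n f t t0 ta s =>
      .memXmc n f (LTerm.subst dbNs x u t) (LTerm.subst dbNs x u t0) (LTerm.subst dbNs x u ta) (LTerm.subst dbNs x u s)
  | .memF n f t1 t2 t3 t4 t5 t6 t7 =>
      .memF n f (LTerm.subst dbNs x u t1) (LTerm.subst dbNs x u t2) (LTerm.subst dbNs x u t3)
        (LTerm.subst dbNs x u t4) (LTerm.subst dbNs x u t5) (LTerm.subst dbNs x u t6) (LTerm.subst dbNs x u t7)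
  | .memG n f t1 t2 t3 t4 t5 t6 t7 =>
      .memG n f (LTerm.subst dbNs x u t1) (LTerm.subst dbNs x u t2) (LTerm.subst dbNs x u t3)
        (LTerm.subst dbNs x u t4) (LTerm.subst dbNs x u t5) (LTerm.subst dbNs x u t6) (LTerm.subst dbNs x u t7)
  | .box n φ => .box n (φ.subst dbNs x u)
termination_by φ => sizeOf φ
end

/-- Substitution `φ[t/x]` for a database variable. -/
def Fml.substDb (x : ℕ) (u : LTerm σ) (φ : Fml σ) : Fml σ := φ.subst true x u
/-- Substitution `φ[t/x]` for an algorithmic variable. -/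
def Fml.substA (x : ℕ) (u : LTerm σ) (φ : Fml σ) : Fml σ := φ.subst false x u
/-- The formula `conUSet(X)` expressing consistency of the update set
represented by the variable `X` (with name `n`). -/
noncomputable def conUSetF (n : ℕ) : Fml σ :=
  Fml.allFdyn fun f =>
    Fml.allA 0 (Fml.allA 1 (Fml.allA 2
      (Fml.imp
        (Fml.and (Fml.memX n f (.avar 0) (.avar 1)) (Fml.memX n f (.avar 0) (.avar 2)))
        (Fml.eq (.avar 1) (.avar 2)))))

/-- The formula `con(r, X) ≡ upd(r, X) ∧ conUSet(X)`. -/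
noncomputable def conF (r : Rule σ) (n : ℕ) : Fml σ := Fml.and (.upd r n) (conUSetF n)

/-- `wcon(r) ≡ ∃X con(r,X)`, with a chosen index for the bound variable. -/
noncomputable def wconN (n : ℕ) (r : Rule σ) : Fml σ := Fml.exX n (conF r n)

/-- Weak consistency `wcon(r)` of a rule. -/
noncomputable def wconF (r : Rule σ) : Fml σ := wconN 0 r

/-- Strong consistency `scon(r)` of a rule. -/
noncomputable def sconF (r : Rule σ) : Fml σ := Fml.allX 0 (Fml.imp (.upd r 0) (conUSetF 0))

/-- The formula expressing that the update set `X` is empty. -/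
noncomputable def emptyXF (n : ℕ) : Fml σ :=
  Fml.allFdyn fun f =>
    Fml.allA 0 (Fml.allA 1 (Fml.not (Fml.memX n f (.avar 0) (.avar 1))))

/-- The formula expressing that the update multiset `Ẍ` is empty. -/
noncomputable def emptyXmF (n : ℕ) : Fml σ :=
  Fml.allFdyn fun f =>
    Fml.allA 0 (Fml.allA 1 (Fml.allA 2 (Fml.not (Fml.memXm n f (.avar 0) (.avar 1) (.avar 2)))))

/-- The formula expressing that the update set `X` (name `xn`) is the
projection of the update multiset `Ẍ` (name `xmn`). -/
noncomputable def projEq (xn xmn : ℕ) : Fml σ :=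
  Fml.allFdyn fun f =>
    Fml.allA 0 (Fml.allA 1
      (Fml.iff (Fml.memX xn f (.avar 0) (.avar 1))
        (Fml.exA 2 (Fml.memXm xmn f (.avar 0) (.avar 1) (.avar 2)))))

/-- `joinable(r₁, r₂)`. -/
noncomputable def joinableF (r₁ r₂ : Rule σ) : Fml σ :=
  Fml.exX 0 (Fml.exX 1 (Fml.and (Fml.and (.upd r₁ 0) (.upd r₂ 1))
    (Fml.allFdyn fun f =>
      Fml.allA 0 (Fml.allA 1 (Fml.allA 2
        (Fml.imp
          (Fml.and (Fml.memX 0 f (.avar 0) (.avar 1)) (Fml.memX 1 f (.avar 0) (.avar 2)))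
          (Fml.eq (.avar 1) (.avar 2))))))))

/-- "`F_f` is a bijection from `Ẍ|_f` to `𝒳̈|_f`" (used in Axiom UM3). -/
def bijF (nXm nXmc nF : ℕ) (f : σ.F) : Fml σ :=
  let X3 : ℕ → ℕ → ℕ → Fml σ := fun a b c =>
    Fml.memXm nXm f (.avar a) (.avar b) (.avar c)
  let Xc4 : ℕ → ℕ → ℕ → ℕ → Fml σ := fun a b c d =>
    Fml.memXmc nXmc f (.avar a) (.avar b) (.avar c) (.avar d)
  let Ff : ℕ → ℕ → ℕ → ℕ → ℕ → ℕ → ℕ → Fml σ := fun a b c d e g h =>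
    Fml.memF nF f (.avar a) (.avar b) (.avar c) (.avar d) (.avar e) (.avar g) (.avar h)
  Fml.allAs [0,1,2,3,4,5,6,7,8,9,10] (Fml.bigAnd [
    Fml.imp (Ff 0 1 2 3 4 5 6) (Fml.and (X3 0 1 2) (Xc4 3 4 5 6)),
    Fml.imp (Fml.and (Ff 0 1 2 3 4 5 6) (Ff 0 1 2 7 8 9 10))
      (Fml.bigAnd [Fml.eq (.avar 3) (.avar 7), Fml.eq (.avar 4) (.avar 8),
        Fml.eq (.avar 5) (.avar 9), Fml.eq (.avar 6) (.avar 10)]),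
    Fml.imp (X3 0 1 2) (Fml.exAs [3,4,5,6] (Ff 0 1 2 3 4 5 6)),
    Fml.imp (Fml.and (Ff 0 1 2 7 8 9 10) (Ff 3 4 5 7 8 9 10))
      (Fml.bigAnd [Fml.eq (.avar 0) (.avar 3), Fml.eq (.avar 1) (.avar 4),
        Fml.eq (.avar 2) (.avar 5)]),
    Fml.imp (Xc4 3 4 5 6) (Fml.exAs [0,1,2] (Ff 0 1 2 3 4 5 6))])

/-- "`G_f` is a bijection from `Ẍ|_f` to `(Ẏ₁ ⊎ Ẏ₂)|_f`" (used in Axiom UM4). -/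
def bijG (nXm nY1 nY2 nG : ℕ) (f : σ.F) : Fml σ :=
  let X3 : ℕ → ℕ → ℕ → Fml σ := fun a b c =>
    Fml.memXm nXm f (.avar a) (.avar b) (.avar c)
  let Y1 : ℕ → ℕ → ℕ → Fml σ := fun a b c =>
    Fml.memXm nY1 f (.avar a) (.avar b) (.avar c)
  let Y2 : ℕ → ℕ → ℕ → Fml σ := fun a b c =>
    Fml.memXm nY2 f (.avar a) (.avar b) (.avar c)
  let Y : ℕ → ℕ → ℕ → Fml σ := fun a b c => Fml.or (Y1 a b c) (Y2 a b c)
  let Gf : ℕ → ℕ → ℕ → ℕ → ℕ → ℕ → ℕ → Fml σ := fun a b c d e g h =>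
    Fml.memG nG f (.avar a) (.avar b) (.avar c) (.avar d) (.avar e) (.avar g) (.avar h)
  Fml.allAs [0,1,2,3,4,5,6,7,8,9,10] (Fml.bigAnd [
    Fml.imp (Gf 0 1 2 3 4 5 6) (Fml.and (X3 0 1 2) (Y 3 4 5)),
    Fml.imp (Fml.and (Gf 0 1 2 3 4 5 6) (Gf 0 1 2 7 8 9 10))
      (Fml.bigAnd [Fml.eq (.avar 3) (.avar 7), Fml.eq (.avar 4) (.avar 8),
        Fml.eq (.avar 5) (.avar 9), Fml.eq (.avar 6) (.avar 10)]),
    Fml.imp (X3 0 1 2) (Fml.exAs [3,4,5,6] (Gf 0 1 2 3 4 5 6)),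
    Fml.imp (Fml.and (Gf 0 1 2 7 8 9 10) (Gf 3 4 5 7 8 9 10))
      (Fml.bigAnd [Fml.eq (.avar 0) (.avar 3), Fml.eq (.avar 1) (.avar 4),
        Fml.eq (.avar 2) (.avar 5)]),
    Fml.imp (Y 3 4 5) (Fml.exAs [0,1,2,6] (Gf 0 1 2 3 4 5 6)),
    Fml.imp (Fml.and (Y1 3 4 5) (Y2 3 4 5))
      (Fml.exAs [0,1,2,6,7,8,9,10] (Fml.bigAnd [
        Fml.not (Fml.bigAnd [Fml.eq (.avar 0) (.avar 7), Fml.eq (.avar 1) (.avar 8),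
          Fml.eq (.avar 2) (.avar 9)]),
        Fml.not (Fml.eq (.avar 6) (.avar 10)),
        Gf 0 1 2 3 4 5 6, Gf 7 8 9 3 4 5 10]))])

/-- The right-hand sides of Axioms U1–U7 for the predicate `upd(r, X)`. -/
noncomputable def updAxRHS : Rule σ → ℕ → Fml σ
  | .assign f t s, n =>
      let i := max t.bnd s.bnd
      Fml.and (Fml.memX n f t.toL s.toL)
        (Fml.and
          (Fml.allA i (Fml.allA (i+1)
            (Fml.imp (Fml.memX n f (.avar i) (.avar (i+1)))
              (Fml.and (Fml.eq (.avar i) t.toL) (Fml.eq (.avar (i+1)) s.toL)))))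
          (Fml.allFdynNe f fun f' =>
            Fml.allA 0 (Fml.allA 1 (Fml.not (Fml.memX n f' (.avar 0) (.avar 1))))))
  | .cond φ r, n =>
      Fml.or (Fml.and φ.toF (.upd r n)) (Fml.and (Fml.not φ.toF) (emptyXF n))
  | .forall_ x φ r, n =>
      let j := max (max φ.bnd r.bnd) (x+1)
      Fml.exXc 0 (Fml.and
        (Fml.allDb x (Fml.and
          (Fml.imp φ.toF (Fml.exX (n+1) (Fml.and (.upd r (n+1))
            (Fml.allFdyn fun f =>
              Fml.allDb j (Fml.allA (j+1)
                (Fml.iff (Fml.memX (n+1) f (.var j) (.avar (j+1)))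
                  (Fml.memXc 0 f (.var j) (.avar (j+1)) (.var x))))))))
          (Fml.imp (Fml.not φ.toF)
            (Fml.allFdyn fun f =>
              Fml.allDb j (Fml.allA (j+1)
                (Fml.not (Fml.memXc 0 f (.var j) (.avar (j+1)) (.var x))))))))
        (Fml.allFdyn fun f =>
          Fml.allDb j (Fml.allA (j+1)
            (Fml.iff (Fml.memX n f (.var j) (.avar (j+1)))
              (Fml.exDb (j+2) (Fml.memXc 0 f (.var j) (.avar (j+1)) (.var (j+2))))))))
  | .par r₁ r₂, n =>
      Fml.exX (n+1) (Fml.exX (n+2)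
        (Fml.and (Fml.and (.upd r₁ (n+1)) (.upd r₂ (n+2)))
          (Fml.allFdyn fun f =>
            Fml.allDb 0 (Fml.allA 1
              (Fml.iff (Fml.memX n f (.var 0) (.avar 1))
                (Fml.or (Fml.memX (n+1) f (.var 0) (.avar 1))
                  (Fml.memX (n+2) f (.var 0) (.avar 1))))))))
  | .choose x φ r, n => Fml.exDb x (Fml.and φ.toF (.upd r n))
  | .seq r₁ r₂, n =>
      Fml.or (Fml.and (.upd r₁ n) (Fml.not (conUSetF n)))
        (Fml.exX (n+1) (Fml.exX (n+2)
          (Fml.and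
            (Fml.and (Fml.and (.upd r₁ (n+1)) (conUSetF (n+1)))
              (.box (n+1) (.upd r₂ (n+2))))
            (Fml.allFdyn fun f =>
              Fml.allDb 0 (Fml.allA 1
                (Fml.iff (Fml.memX n f (.var 0) (.avar 1))
                  (Fml.or
                    (Fml.and (Fml.memX (n+1) f (.var 0) (.avar 1))
                      (Fml.allA 2 (Fml.not (Fml.memX (n+2) f (.var 0) (.avar 2)))))
                    (Fml.memX (n+2) f (.var 0) (.avar 1)))))))))
  | .letr f t ρ r, n =>
      let j := max t.bnd r.bnd
      Fml.exXm 0 (Fml.and (.upm r 0)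
        (Fml.and
          (Fml.allDb j (Fml.allA (j+1)
            (Fml.iff (Fml.memX n f (.var j) (.avar (j+1)))
              (Fml.or
                (Fml.and (Fml.eq t.toL (.var j))
                  (Fml.eq (.avar (j+1))
                    (.rho ρ (j+2) (LTerm.var (j+2))
                      (Fml.exA (j+3)
                        (Fml.memXm 0 f (.var j) (.var (j+2)) (.avar (j+3)))))))
                (Fml.and (Fml.not (Fml.eq t.toL (.var j)))
                  (Fml.exA (j+3) (Fml.memXm 0 f (.var j) (.avar (j+1)) (.avar (j+3)))))))))
          (Fml.allFdynNe f fun f' =>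
            Fml.allDb j (Fml.allA (j+1)
              (Fml.iff (Fml.memX n f' (.var j) (.avar (j+1)))
                (Fml.exA (j+3) (Fml.memXm 0 f' (.var j) (.avar (j+1)) (.avar (j+3)))))))))

/-- The right-hand sides of Axioms UM1–UM7 for the predicate `upm(r, Ẍ)`. -/
noncomputable def upmAxRHS : Rule σ → ℕ → Fml σ
  | .assign f t s, n =>
      let i := max t.bnd s.bnd
      Fml.and
        (Fml.exA i (Fml.and (Fml.memXm n f t.toL s.toL (.avar i))
          (Fml.allDb (i+1) (Fml.allA (i+2) (Fml.allA (i+3)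
            (Fml.imp (Fml.memXm n f (.var (i+1)) (.avar (i+2)) (.avar (i+3)))
              (Fml.bigAnd [Fml.eq (.var (i+1)) t.toL, Fml.eq (.avar (i+2)) s.toL,
                Fml.eq (.avar i) (.avar (i+3))])))))))
        (Fml.allFdynNe f fun f' =>
          Fml.allA 0 (Fml.allA 1 (Fml.allA 2
            (Fml.not (Fml.memXm n f' (.avar 0) (.avar 1) (.avar 2))))))
  | .cond φ r, n =>
      Fml.or (Fml.and φ.toF (.upm r n)) (Fml.and (Fml.not φ.toF) (emptyXmF n))
  | .forall_ x φ r, n =>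
      let j := max (max φ.bnd r.bnd) (x+1)
      Fml.exXmc 0 (Fml.and
        (Fml.allDb x (Fml.and
          (Fml.imp φ.toF (Fml.exXm (n+1) (Fml.and (.upm r (n+1))
            (Fml.allFdyn fun f =>
              Fml.allAs [j, j+1, j+2]
                (Fml.iff (Fml.memXm (n+1) f (.avar j) (.avar (j+1)) (.avar (j+2)))
                  (Fml.memXmc 0 f (.avar j) (.avar (j+1)) (.avar (j+2)) (.var x)))))))
          (Fml.imp (Fml.not φ.toF)
            (Fml.allFdyn fun f =>
              Fml.allAs [j, j+1, j+2]
                (Fml.not (Fml.memXmc 0 f (.avar j) (.avar (j+1)) (.avar (j+2)) (.var x)))))))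
        (Fml.allFdyn fun f =>
          Fml.exF 0 (Fml.and (bijF n 0 0 f)
            (Fml.allAs [0,1,2]
              (Fml.iff (Fml.memXm n f (.avar 0) (.avar 1) (.avar 2))
                (Fml.exAs [3,4]
                  (Fml.memF 0 f (.avar 0) (.avar 1) (.avar 2) (.avar 0) (.avar 1)
                    (.avar 3) (.avar 4))))))))
  | .par r₁ r₂, n =>
      Fml.exXm (n+1) (Fml.exXm (n+2)
        (Fml.and (Fml.and (.upm r₁ (n+1)) (.upm r₂ (n+2)))
          (Fml.allFdyn fun f =>
            Fml.exG 0 (Fml.and (bijG n (n+1) (n+2) 0 f)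
              (Fml.allAs [0,1,2]
                (Fml.iff (Fml.memXm n f (.avar 0) (.avar 1) (.avar 2))
                  (Fml.exAs [3,4]
                    (Fml.memG 0 f (.avar 0) (.avar 1) (.avar 2) (.avar 0) (.avar 1)
                      (.avar 3) (.avar 4)))))))))
  | .choose x φ r, n => Fml.exDb x (Fml.and φ.toF (.upm r n))
  | .seq r₁ r₂, n =>
      Fml.or
        (Fml.and (.upm r₁ n)
          (Fml.allX n (Fml.imp (projEq n n) (Fml.not (conUSetF n)))))
        (Fml.exXm (n+1) (Fml.exXm (n+2)
          (Fml.and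
            (Fml.and (.upm r₁ (n+1))
              (Fml.allX n (Fml.imp (projEq n (n+1))
                (Fml.and (conUSetF n) (.box n (.upm r₂ (n+2)))))))
            (Fml.allFdyn fun f =>
              Fml.allAs [0,1,2]
                (Fml.iff (Fml.memXm n f (.avar 0) (.avar 1) (.avar 2))
                  (Fml.or (Fml.memXm (n+2) f (.avar 0) (.avar 1) (.avar 2))
                    (Fml.and (Fml.memXm (n+1) f (.avar 0) (.avar 1) (.avar 2))
                      (Fml.allAs [3,4]
                        (Fml.not (Fml.memXm (n+2) f (.avar 0) (.avar 3) (.avar 4)))))))))))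
  | .letr f t ρ r, n =>
      let j := max t.bnd r.bnd
      Fml.exXm (n+1) (Fml.exA j (Fml.and (.upm r (n+1))
        (Fml.and
          (Fml.allAs [j+1, j+2, j+3]
            (Fml.iff (Fml.memXm n f (.avar (j+1)) (.avar (j+2)) (.avar (j+3)))
              (Fml.or
                (Fml.and (Fml.not (Fml.eq t.toL (.avar (j+1))))
                  (Fml.memXm (n+1) f (.avar (j+1)) (.avar (j+2)) (.avar (j+3))))
                (Fml.and (Fml.eq t.toL (.avar (j+1)))
                  (Fml.and
                    (Fml.eq (.avar (j+2))
                      (.rho ρ (j+4) (LTerm.var (j+4))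
                        (Fml.exA (j+5)
                          (Fml.memXm (n+1) f (.avar (j+1)) (.var (j+4)) (.avar (j+5))))))
                    (Fml.eq (.avar (j+3)) (.avar j)))))))
          (Fml.allFdynNe f fun f' =>
            Fml.allAs [j+1, j+2, j+3]
              (Fml.iff (Fml.memXm n f' (.avar (j+1)) (.avar (j+2)) (.avar (j+3)))
                (Fml.memXm (n+1) f' (.avar (j+1)) (.avar (j+2)) (.avar (j+3))))))))

/-- `[r]φ ≡ ∀X(upd(r, X) → [X]φ)`, with a chosen name `n` for the bound
variable `X` (to be chosen not free in `φ`). -/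
def boxR (r : Rule σ) (n : ℕ) (φ : Fml σ) : Fml σ :=
  Fml.allX n (Fml.imp (.upd r n) (.box n φ))

/-- `⟨r⟩φ ≡ ∃X(upd(r, X) ∧ [X]φ)`. -/
def diaR (r : Rule σ) (n : ℕ) (φ : Fml σ) : Fml σ :=
  Fml.exX n (Fml.and (.upd r n) (.box n φ))

/-- A state models a formula: the formula is true under every first-order
variable assignment and every (finite) second-order variable assignment. -/
def Satisfies (I : Interp σ B) (φ : Fml σ) : Prop :=
  ∀ (ζ : Asg B) (Ξ : SOAsg σ B), Ξ.Fin → fval I ζ Ξ φ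

/-- Logical consequence `Φ ⊨ φ`. -/
def Conseq (Φ : Set (Fml σ)) (φ : Fml σ) : Prop :=
  ∀ (B : Type) (I : Interp σ B), (∀ ψ ∈ Φ, Satisfies I ψ) → Satisfies I φ

/-- Logical equivalence of formulae: same truth value in every state under
every variable assignment. -/
def FmlEquiv (φ ψ : Fml σ) : Prop :=
  ∀ (B : Type) (I : Interp σ B) (ζ : Asg B) (Ξ : SOAsg σ B), Ξ.Fin →
    (fval I ζ Ξ φ ↔ fval I ζ Ξ ψ)

/-- Equivalence of DB-ASM rules: `S ⊨ ∀X(upd(r₁,X) ↔ upd(r₂,X))` for every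
state `S`. -/
def RuleEquiv (r₁ r₂ : Rule σ) : Prop :=
  ∀ (B : Type) (I : Interp σ B),
    Satisfies I (Fml.allX 0 (Fml.iff (.upd r₁ 0) (.upd r₂ 0)))

/-- A rule is defined if it yields at least one update set in every state. -/
def RuleDefined (r : Rule σ) : Prop :=
  ∀ (B : Type) (I : Interp σ B) (ζ : Asg B), (updSets r I ζ).Nonempty

/-- A rule is deterministic if it yields exactly one update set in every
state under every variable assignment. -/
def RuleDeterministic (r : Rule σ) : Prop :=
  ∀ (B : Type) (I : Interp σ B) (ζ : Asg B), ∃! Δ, Δ ∈ updSets r I ζ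
/-- The proof system 𝔑 of the logic for DB-ASMs: Axioms U1–U7 for
`upd(r, X)`, Axioms UM1–UM7 for `upm(r, Ẍ)`, the modal axioms and rules
M1–M8, Axioms A1–A3, the classical axiom schemes P1–P3 with modus ponens,
the quantifier rules UI, EG, UG, EI, the equality axioms EQ1–EQ3, the
dynamic-logic axiom DY1 and the extensionality axiom E.
`Deriv Φ φ` expresses derivability `Φ ⊢ φ`. -/
inductive Deriv (Φ : Set (Fml σ)) : Fml σ → Prop where
  | hyp {φ : Fml σ} : φ ∈ Φ → Deriv Φ φ
  -- Axioms U1–U7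
  | updAx (r : Rule σ) (n : ℕ) : Deriv Φ (Fml.iff (.upd r n) (updAxRHS r n))
  -- Axioms UM1–UM7
  | upmAx (r : Rule σ) (n : ℕ) : Deriv Φ (Fml.iff (.upm r n) (upmAxRHS r n))
  -- M1 (Distribution Axiom of K)
  | m1 (n : ℕ) (φ ψ : Fml σ) :
      Deriv Φ (Fml.imp (.box n (Fml.imp φ ψ)) (Fml.imp (.box n φ) (.box n ψ)))
  -- M2 (Necessitation)
  | m2 (n : ℕ) {φ : Fml σ} : Deriv Φ φ → Deriv Φ (.box n φ)
  -- M3 (Modus Ponens)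
  | m3 {φ ψ : Fml σ} : Deriv Φ φ → Deriv Φ (Fml.imp φ ψ) → Deriv Φ ψ
  -- M4
  | m4 (n : ℕ) (φ : Fml σ) : Deriv Φ (Fml.imp (Fml.not (conUSetF n)) (.box n φ))
  -- M5
  | m5 (n : ℕ) (φ : Fml σ) : Deriv Φ (Fml.imp (Fml.not (.box n φ)) (.box n (Fml.not φ)))
  -- M6 (Barcan axioms, for first- and second-order quantifiers)
  | m6db (n x : ℕ) (φ : Fml σ) :
      Deriv Φ (Fml.imp (.allDb x (.box n φ)) (.box n (.allDb x φ)))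
  | m6a (n x : ℕ) (φ : Fml σ) :
      Deriv Φ (Fml.imp (.allA x (.box n φ)) (.box n (.allA x φ)))
  | m6m (n k : ℕ) (φ : Fml σ) :
      Deriv Φ (Fml.imp (.allM k (.box n φ)) (.box n (.allM k φ)))
  | m6x (n k : ℕ) (φ : Fml σ) : k ≠ n →
      Deriv Φ (Fml.imp (.allX k (.box n φ)) (.box n (.allX k φ)))
  | m6xc (n k : ℕ) (φ : Fml σ) :
      Deriv Φ (Fml.imp (.allXc k (.box n φ)) (.box n (.allXc k φ)))
  | m6xm (n k : ℕ) (φ : Fml σ) :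
      Deriv Φ (Fml.imp (.allXm k (.box n φ)) (.box n (.allXm k φ)))
  | m6xmc (n k : ℕ) (φ : Fml σ) :
      Deriv Φ (Fml.imp (.allXmc k (.box n φ)) (.box n (.allXmc k φ)))
  | m6f (n k : ℕ) (φ : Fml σ) :
      Deriv Φ (Fml.imp (.allF k (.box n φ)) (.box n (.allF k φ)))
  | m6g (n k : ℕ) (φ : Fml σ) :
      Deriv Φ (Fml.imp (.allG k (.box n φ)) (.box n (.allG k φ)))
  -- M7 and M8 (static and pure formulae)
  | m7 (r : Rule σ) (n : ℕ) {φ : Fml σ} : φ.isStatic → φ.isPure →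
      Deriv Φ (Fml.imp (Fml.and (conF r n) φ) (.box n φ))
  | m8 (r : Rule σ) (n : ℕ) {φ : Fml σ} : φ.isStatic → φ.isPure →
      Deriv Φ (Fml.imp (Fml.and (conF r n) (.box n φ)) φ)
  -- A1, A2, A3
  | a1 (n : ℕ) (f : σ.F) (x y : ℕ) :
      Deriv Φ (Fml.imp
        (Fml.and (conUSetF n)
          (Fml.and
            (Fml.allA (max x y + 1)
              (Fml.not (Fml.memX n f (.avar x) (.avar (max x y + 1)))))
            (Fml.eq (.dyn f (.avar x)) (.avar y))))
        (.box n (Fml.eq (.dyn f (.avar x)) (.avar y))))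
  | a2 (n : ℕ) (f : σ.F) (x y : ℕ) :
      Deriv Φ (Fml.imp (Fml.and (conUSetF n) (Fml.memX n f (.avar x) (.avar y)))
        (.box n (Fml.eq (.dyn f (.avar x)) (.avar y))))
  | a3 (r : Rule σ) (m n : ℕ) :
      Deriv Φ (Fml.imp (.upm r m) (Fml.exX n (.upd r n)))
  -- P1–P3
  | p1 (φ ψ : Fml σ) : Deriv Φ (Fml.imp φ (Fml.imp ψ φ))
  | p2 (φ ψ χ : Fml σ) :
      Deriv Φ (Fml.imp (Fml.imp φ (Fml.imp ψ χ))
        (Fml.imp (Fml.imp φ ψ) (Fml.imp φ χ)))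
  | p3 (φ ψ : Fml σ) :
      Deriv Φ (Fml.imp (Fml.imp (Fml.not φ) (Fml.not ψ)) (Fml.imp ψ φ))
  -- UI (Universal Instantiation)
  | uiDb {φ : Fml σ} (x : ℕ) (t : LTerm σ) : (φ.isPure ∨ t.isStatic) →
      Deriv Φ (.allDb x φ) → Deriv Φ (φ.substDb x t)
  | uiA {φ : Fml σ} (x : ℕ) (t : LTerm σ) : (φ.isPure ∨ t.isStatic) →
      Deriv Φ (.allA x φ) → Deriv Φ (φ.substA x t)
  -- EG (Existential Generalisation)
  | egDb {φ : Fml σ} (x : ℕ) (t : LTerm σ) : (φ.isPure ∨ t.isStatic) →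
      Deriv Φ (φ.substDb x t) → Deriv Φ (Fml.exDb x φ)
  | egA {φ : Fml σ} (x : ℕ) (t : LTerm σ) : (φ.isPure ∨ t.isStatic) →
      Deriv Φ (φ.substA x t) → Deriv Φ (Fml.exA x φ)
  -- UG (Universal Generalisation, an ω-rule over static terms)
  | ugDb {φ : Fml σ} (x : ℕ) :
      (∀ t : LTerm σ, t.isStatic → Deriv Φ (φ.substDb x t)) →
      Deriv Φ (.allDb x φ)
  | ugA {φ : Fml σ} (x : ℕ) :
      (∀ t : LTerm σ, t.isStatic → Deriv Φ (φ.substA x t)) →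
      Deriv Φ (.allA x φ)
  -- EI (Existential Instantiation: `t` represents a valuation for `x`
  -- satisfying `φ`)
  | eiDb {φ : Fml σ} (x : ℕ) (t : LTerm σ) : (φ.isPure ∨ t.isStatic) →
      (∀ (B : Type) (I : Interp σ B) (ζ : Asg B) (Ξ : SOAsg σ B), Ξ.Fin →
        (∀ ψ ∈ Φ, fval I ζ Ξ ψ) → fval I ζ Ξ (Fml.exDb x φ) →
        fval I ζ Ξ (φ.substDb x t)) →
      Deriv Φ (Fml.exDb x φ) → Deriv Φ (φ.substDb x t)
  | eiA {φ : Fml σ} (x : ℕ) (t : LTerm σ) : (φ.isPure ∨ t.isStatic) →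
      (∀ (B : Type) (I : Interp σ B) (ζ : Asg B) (Ξ : SOAsg σ B), Ξ.Fin →
        (∀ ψ ∈ Φ, fval I ζ Ξ ψ) → fval I ζ Ξ (Fml.exA x φ) →
        fval I ζ Ξ (φ.substA x t)) →
      Deriv Φ (Fml.exA x φ) → Deriv Φ (φ.substA x t)
  -- EQ1–EQ3 (equality axioms, restricted to static terms)
  | eqRefl (t : LTerm σ) : t.isStatic → Deriv Φ (.eq t t)
  | eqFunD (f : σ.F) (t₁ t₂ : LTerm σ) : t₁.isStatic → t₂.isStatic →
      Deriv Φ (Fml.imp (.eq t₁ t₂) (.eq (.dyn f t₁) (.dyn f t₂)))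
  | eqFunS (g : σ.Stat) (t₁ t₂ : LTerm σ) : t₁.isStatic → t₂.isStatic →
      Deriv Φ (Fml.imp (.eq t₁ t₂) (.eq (.stat g t₁) (.stat g t₂)))
  | eqRho (ρ : σ.Rho) (x : ℕ) (t₁ t₂ : LTerm σ) (φ₁ φ₂ : Fml σ) :
      t₁.isStatic → t₂.isStatic → φ₁.isPure → φ₂.isPure →
      Deriv Φ (Fml.imp (Fml.and (.eq t₁ t₂) (Fml.iff φ₁ φ₂))
        (.eq (.rho ρ x t₁ φ₁) (.rho ρ x t₂ φ₂)))
  -- DY1 (dynamic-logic axiom for sequence rules)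
  | dy1 (r₁ r₂ : Rule σ) (φ : Fml σ) (n n₁ n₂ : ℕ) :
      n ∉ φ.freeX → n₁ ∉ φ.freeX → n₂ ∉ φ.freeX → n₁ ≠ n₂ →
      Deriv Φ (Fml.iff
        (Fml.exX n (Fml.and (.upd (.seq r₁ r₂) n) (.box n φ)))
        (Fml.exX n₁ (Fml.and (.upd r₁ n₁)
          (.box n₁ (Fml.exX n₂ (Fml.and (.upd r₂ n₂) (.box n₂ φ)))))))
  -- E (extensionality axiom)
  | ext (r₁ r₂ : Rule σ) (φ : Fml σ) (n₁ n₂ : ℕ) :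
      n₁ ≠ n₂ → n₁ ∉ φ.freeX → n₂ ∉ φ.freeX → RuleEquiv r₁ r₂ →
      Deriv Φ (Fml.exX n₁ (Fml.exX n₂ (Fml.iff
        (Fml.and (.upd r₁ n₁) (.box n₁ φ))
        (Fml.and (.upd r₂ n₂) (.box n₂ φ)))))

theorem seqComp_assoc (Δ₁ Δ₂ Δ₃ : USet σ B) :
    seqComp (seqComp Δ₁ Δ₂) Δ₃ = seqComp Δ₁ (seqComp Δ₂ Δ₃) := by
  ext ⟨f, a, b⟩
  simp only [seqComp, Set.mem_union, Set.mem_ofPred_eq]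
  by_cases h : ∃ c, (f, a, c) ∈ Δ₃
  · obtain ⟨c, hc⟩ := h
    grind
  · grind

theorem consistentU_seqComp_iff {Δ₁ Δ₂ : USet σ B} (h : consistentU Δ₁) :
    consistentU (seqComp Δ₁ Δ₂) ↔ consistentU Δ₂ := by
  simp only [consistentU, seqComp, Set.mem_union, Set.mem_ofPred_eq] at *
  constructor
  · exact fun H f a b b' hb hb' => H f a b b' (.inl hb) (.inl hb')
  · rintro H f a b b' (hb | ⟨hb, hn⟩) (hb' | ⟨hb', hn'⟩)
    · exact H f a b b' hb hb'
    · exact absurd hb (hn' b)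
    · exact absurd hb' (hn b')
    · exact h f a b b' hb hb'

theorem Interp.apply_dyn_of_mem (I : Interp σ B) {Δ : USet σ B} (hΔ : consistentU Δ)
    {f : σ.F} {a b : B} (hb : (f, a, b) ∈ Δ) : (I.apply Δ).dyn f a = b := by
  have h : ∃ b, (f, a, b) ∈ Δ := ⟨b, hb⟩
  simp only [Interp.apply, dif_pos h]
  exact hΔ f a _ _ h.choose_spec hb

theorem Interp.apply_dyn_of_forall_notMem (I : Interp σ B) {Δ : USet σ B}
    {f : σ.F} {a : B} (h : ∀ b, (f, a, b) ∉ Δ) : (I.apply Δ).dyn f a = I.dyn f a := by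
  simp [Interp.apply, h]

theorem Interp.apply_seqComp (I : Interp σ B) {Δ₁ Δ₂ : USet σ B}
    (h₁ : consistentU Δ₁) (h₂ : consistentU Δ₂) :
    I.apply (seqComp Δ₁ Δ₂) = (I.apply Δ₁).apply Δ₂ := by
  have h := (consistentU_seqComp_iff h₁).2 h₂
  have hdyn : (I.apply (seqComp Δ₁ Δ₂)).dyn = ((I.apply Δ₁).apply Δ₂).dyn := by
    funext f a
    by_cases hb₂ : ∃ b, (f, a, b) ∈ Δ₂
    · obtain ⟨b, hb⟩ := hb₂
      rw [apply_dyn_of_mem _ h₂ hb, apply_dyn_of_mem _ h (.inl hb)]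
    · push Not at hb₂
      rw [apply_dyn_of_forall_notMem _ hb₂]
      by_cases hb₁ : ∃ b, (f, a, b) ∈ Δ₁
      · obtain ⟨b, hb⟩ := hb₁
        rw [apply_dyn_of_mem _ h₁ hb, apply_dyn_of_mem _ h (.inr ⟨hb, hb₂⟩)]
      · push Not at hb₁
        rw [apply_dyn_of_forall_notMem _ hb₁, apply_dyn_of_forall_notMem]
        rintro b (hb | hb)
        · exact hb₂ b hb
        · exact hb₁ b hb.1
  exact congrArg (fun d => { I with dyn := d }) hdyn

theorem updSets_par_comm (r₁ r₂ : Rule σ) (I : Interp σ B) (ζ : Asg B) :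
    updSets (.par r₁ r₂) I ζ = updSets (.par r₂ r₁) I ζ := by
  ext Δ
  simp only [updSets, Set.mem_ofPred_eq]
  constructor <;> rintro ⟨Δ₁, h₁, Δ₂, h₂, rfl⟩ <;>
    exact ⟨Δ₂, h₂, Δ₁, h₁, Set.union_comm _ _⟩

theorem updSets_par_assoc (r₁ r₂ r₃ : Rule σ) (I : Interp σ B) (ζ : Asg B) :
    updSets (.par (.par r₁ r₂) r₃) I ζ = updSets (.par r₁ (.par r₂ r₃)) I ζ := by
  ext Δ
  simp only [updSets, Set.mem_ofPred_eq]
  constructor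
  · rintro ⟨_, ⟨Δ₁, h₁, Δ₂, h₂, rfl⟩, Δ₃, h₃, rfl⟩
    exact ⟨Δ₁, h₁, _, ⟨Δ₂, h₂, Δ₃, h₃, rfl⟩, Set.union_assoc _ _ _⟩
  · rintro ⟨Δ₁, h₁, _, ⟨Δ₂, h₂, Δ₃, h₃, rfl⟩, rfl⟩
    exact ⟨_, ⟨Δ₁, h₁, Δ₂, h₂, rfl⟩, Δ₃, h₃, (Set.union_assoc _ _ _).symm⟩

theorem updSets_seq_assoc (r₁ r₂ r₃ : Rule σ) (I : Interp σ B) (ζ : Asg B) :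
    updSets (.seq (.seq r₁ r₂) r₃) I ζ = updSets (.seq r₁ (.seq r₂ r₃)) I ζ := by
  ext Δ
  simp only [updSets, Set.mem_union, Set.mem_ofPred_eq]
  constructor
  · rintro (⟨_, ⟨Δ₁, h₁, c₁, Δ₂, h₂, rfl⟩ | ⟨_, hn⟩, c, Δ₃, h₃, rfl⟩ |
      ⟨⟨Δ₁, h₁, c₁, Δ₂, h₂, rfl⟩ | h, hn⟩)
    · have c₂ := (consistentU_seqComp_iff c₁).1 c
      rw [I.apply_seqComp c₁ c₂] at h₃
      exact .inl ⟨Δ₁, h₁, c₁, _, .inl ⟨Δ₂, h₂, c₂, Δ₃, h₃, rfl⟩, seqComp_assoc _ _ _⟩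
    · exact absurd c hn
    · rw [consistentU_seqComp_iff c₁] at hn
      exact .inl ⟨Δ₁, h₁, c₁, Δ₂, .inr ⟨h₂, hn⟩, rfl⟩
    · exact .inr h
  · rintro (⟨Δ₁, h₁, c₁, _, ⟨Δ₂, h₂, c₂, Δ₃, h₃, rfl⟩ | ⟨h₂, hn⟩, rfl⟩ | h)
    · rw [← I.apply_seqComp c₁ c₂] at h₃
      exact .inl ⟨_, .inl ⟨Δ₁, h₁, c₁, Δ₂, h₂, rfl⟩, (consistentU_seqComp_iff c₁).2 c₂,
        Δ₃, h₃, (seqComp_assoc _ _ _).symm⟩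
    · exact .inr ⟨.inl ⟨Δ₁, h₁, c₁, _, h₂, rfl⟩, mt (consistentU_seqComp_iff c₁).1 hn⟩
    · exact .inr ⟨.inr h, h.2⟩

theorem ruleEquiv_of_updSets_eq {r r' : Rule σ}
    (h : ∀ (B : Type) (I : Interp σ B) (ζ : Asg B), updSets r I ζ = updSets r' I ζ) :
    RuleEquiv r r' := by
  intro B I ζ Ξ _
  simp [fval, Fml.iff, Fml.imp, h]

/-- Parallel composition of DB-ASM rules is commutative and
associative, and sequential composition is associative, with respect to rule
equivalence `r₁ ≡ r₂` (i.e. `S ⊨ ∀X(upd(r₁,X) ↔ upd(r₂,X))` for every state `S`). -/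
theorem composition_properties {σ : Sig} (r₁ r₂ r₃ : Rule σ) :
    RuleEquiv (.par r₁ r₂) (.par r₂ r₁) ∧
    RuleEquiv (.par (.par r₁ r₂) r₃) (.par r₁ (.par r₂ r₃)) ∧
    RuleEquiv (.seq (.seq r₁ r₂) r₃) (.seq r₁ (.seq r₂ r₃)) := by
  exact ⟨ruleEquiv_of_updSets_eq fun _ => updSets_par_comm r₁ r₂,
    ruleEquiv_of_updSets_eq fun _ => updSets_par_assoc r₁ r₂ r₃,
    ruleEquiv_of_updSets_eq fun _ => updSets_seq_assoc r₁ r₂ r₃⟩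

end DBASM
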